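/- arXiv:2204.09936 — 2 statements merged into one kernel-verified Lean document; each statement's English description precedes it below -/
import Mathlib

section
/- Let G be a finite group, P a Sylow p-subgroup of G, and M a perfect minimal normal subgroup of G with p dividing |M|, such that every composition factor of M is p-compliant. If t ∈ P \ M, then the coset (M ∩ P)t contains an element y that is not conjugate to t in G. -/
/-!
The group `M` is generated by the `G`-conjugates of a nonabelian simple group `S`; distinct
conjugates (the factors) commute, each is normalized by `M`, and `p` divides `|S|`.  By Sylow, every
`p`-element of `Mt` is conjugate to an element of `(M ∩ P)t`, so it suffices to find two
`p`-elements of `Mt` that are not conjugate in `G`: then `t` cannot be conjugate to both of their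
counterparts in `(M ∩ P)t`.

Let `r` be the length of the orbit of `S` under conjugation by `t`, and let `h` be the automorphism
of `S` induced by `t ^ r`.  For `s ∈ S` the element `st` acts on the factors outside this orbit as
`t` does, while `(st) ^ r` acts on `S` as `(conj s) h`.  So every element of `(Inn S)h` is realized,
and a `p`-element there makes `st` a `p`-element, because `M ∩ C(M) = 1`.  The coset `(Inn S)h`
contains two nonconjugate `p`-elements `g₁`, `g₂`: by compliance if `h` is not inner, and because `p`
divides `|S|` otherwise.

The corresponding elements `s₁t`, `s₂t` are told apart by counting the embeddings `φ : S → G` onto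
factors with `y ^ r * φ x * (y ^ r)⁻¹ = φ (g₁ x)`.  This number depends only on the conjugacy class
of `y`.  Outside the orbit of `S` the embeddings counted for `s₁t` and `s₂t` are the same; on the
orbit there are none for `s₂t`, since it induces the class of `g₂` there, but the inclusion of `S`
is counted for `s₁t`.
-/

universe u

/-- A subgroup is subnormal if it is connected to the whole group by a chain
in which each term is normal in the next. -/
def IsSubnormalIn {H : Type u} [Group H] (K : Subgroup H) : Prop :=
  ∃ (n : ℕ) (s : Fin (n + 1) → Subgroup H), s 0 = K ∧ s (Fin.last n) = ⊤ ∧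
    ∀ i : Fin n, s i.castSucc ≤ s i.succ ∧
      ((s i.castSucc).subgroupOf (s i.succ)).Normal

/-- `Q` is a composition factor of `H` if `Q` is isomorphic to a simple quotient
`L/K` of a subnormal subgroup `L` of `H` by a normal subgroup `K`. -/
def IsCompositionFactorOf (Q : Type u) [Group Q] (H : Type u) [Group H] : Prop :=
  ∃ (L : Subgroup H) (K : Subgroup L) (_ : K.Normal), IsSubnormalIn L ∧
    IsSimpleGroup (L ⧸ K) ∧ Nonempty (Q ≃* L ⧸ K)

/-- A finite simple group `S` is `p`-compliant if either `p ∤ |S|`, or for each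
`p`-element `h` of `Aut S` outside `Inn S` the coset `(Inn S)h` contains two
`p`-elements that are not conjugate in `Aut S`. -/
def IsPCompliant (p : ℕ) (S : Type u) [Group S] : Prop :=
  ¬ p ∣ Nat.card S ∨
    ∀ h : MulAut S, h ∉ (MulAut.conj : S →* MulAut S).range →
      (∃ k : ℕ, orderOf h = p ^ k) →
      ∃ g₁ g₂ : MulAut S,
        g₁ * h⁻¹ ∈ (MulAut.conj : S →* MulAut S).range ∧
        g₂ * h⁻¹ ∈ (MulAut.conj : S →* MulAut S).range ∧
        (∃ k : ℕ, orderOf g₁ = p ^ k) ∧ (∃ k : ℕ, orderOf g₂ = p ^ k) ∧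
        ¬ IsConj g₁ g₂

open Pointwise

/-! ### The factors of `M` -/

theorem mem_conj_smul {G : Type u} [Group G] {g x : G} {S : Subgroup G} :
    x ∈ MulAut.conj g • S ↔ g⁻¹ * x * g ∈ S := by
  rw [Subgroup.mem_pointwise_smul_iff_inv_smul_mem, ← map_inv]
  simp [MulAut.smul_def]

theorem conj_mem_conj_smul {G : Type u} [Group G] {g x : G} {S : Subgroup G} (hx : x ∈ S) :
    g * x * g⁻¹ ∈ MulAut.conj g • S := by
  rw [mem_conj_smul]; simpa [mul_assoc] using hx

theorem conj_smul_conj_smul {G : Type u} [Group G] (g h : G) (S : Subgroup G) :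
    MulAut.conj g • MulAut.conj h • S = MulAut.conj (g * h) • S := by
  rw [map_mul, mul_smul]

/-- The conjugates of `S` are the factors of a decomposition of `M`: they are normal in `M`,
distinct ones commute elementwise, and together they generate `M` (in the form that an element
commuting with all of them centralizes `M`). -/
structure IsFactorOf {G : Type u} [Group G] (M S : Subgroup G) : Prop where
  le : S ≤ M
  stable : ∀ m ∈ M, ∀ g : G, MulAut.conj m • MulAut.conj g • S = MulAut.conj g • S
  comm : ∀ g : G, MulAut.conj g • S ≠ S → ∀ x ∈ S, ∀ y ∈ MulAut.conj g • S, Commute x y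
  cent : ∀ z : G, (∀ g : G, ∀ x ∈ MulAut.conj g • S, Commute z x) → ∀ m ∈ M, Commute z m

/-- The center of `M` is normal in `G`, and `M` is not abelian. -/
theorem inf_centralizer_eq_bot {G : Type u} [Group G] (M : Subgroup G) [M.Normal]
    (hperf : ⁅M, M⁆ = M) (hnontriv : M ≠ ⊥)
    (hmin : ∀ B : Subgroup G, B.Normal → B ≤ M → B = ⊥ ∨ B = M) :
    M ⊓ Subgroup.centralizer (M : Set G) = ⊥ := by
  rcases hmin (M ⊓ Subgroup.centralizer (M : Set G)) inferInstance inf_le_left with h | h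
  · exact h
  · exfalso
    apply hnontriv
    rw [← hperf]
    exact Subgroup.commutator_eq_bot_iff_le_centralizer.2 (inf_eq_left.1 h)

/-- A minimal nontrivial `M`-invariant subgroup of `M` is a simple factor: its conjugates intersect
trivially, hence commute, and they generate the minimal normal subgroup `M`. -/
theorem exists_factor {G : Type u} [Group G] [Finite G] (p : ℕ) [Fact p.Prime]
    (M : Subgroup G) [M.Normal] (hnontriv : M ≠ ⊥)
    (hmin : ∀ B : Subgroup G, B.Normal → B ≤ M → B = ⊥ ∨ B = M)
    (hp : p ∣ Nat.card M) :
    ∃ S : Subgroup G, IsFactorOf M S ∧ IsSimpleGroup S ∧ p ∣ Nat.card S := by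
  obtain ⟨S, ⟨⟨hSM, hS1, hSn⟩, hSmin⟩⟩ := Set.Finite.exists_minimal
    (s := {B : Subgroup G | B ≤ M ∧ B ≠ ⊥ ∧ ∀ m ∈ M, ∀ x ∈ B, m * x * m⁻¹ ∈ B})
    (Set.toFinite _) ⟨M, le_rfl, hnontriv, fun m hm x hx => M.mul_mem (M.mul_mem hm hx)
      (M.inv_mem hm)⟩
  have key : ∀ B : Subgroup G, B ≤ S → (∀ m ∈ M, ∀ x ∈ B, m * x * m⁻¹ ∈ B) → B = ⊥ ∨ B = S := by
    intro B hB hBn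
    by_cases h : B = ⊥
    · exact Or.inl h
    · exact Or.inr (le_antisymm hB (hSmin ⟨hB.trans hSM, h, hBn⟩ hB))
  have hconj : ∀ g : G, ∀ m ∈ M, ∀ x ∈ MulAut.conj g • S, m * x * m⁻¹ ∈ MulAut.conj g • S := by
    intro g m hm x hx
    rw [mem_conj_smul] at hx ⊢
    have hm' : g⁻¹ * m * g ∈ M := by
      simpa using ‹M.Normal›.conj_mem m hm g⁻¹
    simpa [mul_assoc] using hSn _ hm' _ hx
  have hle : ∀ g : G, MulAut.conj g • S ≤ M := by
    intro g x hx
    rw [mem_conj_smul] at hx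
    simpa [mul_assoc] using ‹M.Normal›.conj_mem _ (hSM hx) g
  have hstable : ∀ m ∈ M, ∀ g : G, MulAut.conj m • MulAut.conj g • S = MulAut.conj g • S := by
    intro m hm g
    ext x
    rw [mem_conj_smul (g := m)]
    constructor
    · intro h
      simpa [mul_assoc] using hconj g m hm _ h
    · intro h
      simpa [mul_assoc] using hconj g m⁻¹ (M.inv_mem hm) _ h
  have hcomm : ∀ g : G, MulAut.conj g • S ≠ S → ∀ x ∈ S, ∀ y ∈ MulAut.conj g • S, Commute x y := by
    intro g hg x hx y hy
    have hbot : S ⊓ MulAut.conj g • S = ⊥ := by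
      rcases key (S ⊓ MulAut.conj g • S) inf_le_left
        (fun m hm x hx => ⟨hSn m hm x hx.1, hconj g m hm x hx.2⟩) with h | h
      · exact h
      · exfalso
        apply hg
        -- `S ≤ gSg⁻¹`, and the two subgroups have the same order.
        refine (Subgroup.eq_of_le_of_card_ge (inf_eq_left.1 h) ?_).symm
        exact (Nat.card_congr (Subgroup.equivSMul (MulAut.conj g) S).toEquiv).ge
    rw [commute_iff_eq, ← commutatorElement_eq_one_iff_mul_comm, ← Subgroup.mem_bot, ← hbot]
    refine ⟨?_, ?_⟩
    · have := S.mul_mem hx (hSn y (hle g hy) _ (S.inv_mem hx))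
      simpa [commutatorElement_def, mul_assoc] using this
    · exact Subgroup.mul_mem _ (hconj g x (hSM hx) y hy) (Subgroup.inv_mem _ hy)
  have hgen : Subgroup.normalClosure (S : Set G) = M := by
    rcases hmin _ inferInstance (Subgroup.normalClosure_le_normal (N := M) hSM) with h | h
    · exact absurd (le_bot_iff.1 (h ▸ Subgroup.le_normalClosure : S ≤ ⊥)) hS1
    · exact h
  have hsup : ∀ K : Subgroup G, (∀ g : G, MulAut.conj g • S ≤ K) → M ≤ K := by
    intro K hK
    rw [← hgen, Subgroup.normalClosure, Subgroup.closure_le]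
    intro x hx
    obtain ⟨a, ha, hax⟩ := Group.mem_conjugatesOfSet_iff.1 hx
    obtain ⟨c, rfl⟩ := isConj_iff.1 hax
    exact hK c (conj_mem_conj_smul ha)
  have hcent : ∀ z : G, (∀ g : G, ∀ x ∈ MulAut.conj g • S, Commute z x) → ∀ m ∈ M, Commute z m := by
    intro z hz m hm
    have := hsup (Subgroup.centralizer {z}) (fun g x hx => by
      rw [Subgroup.mem_centralizer_iff]
      rintro _ rfl
      exact hz g x hx) hm
    exact Subgroup.mem_centralizer_iff.1 this z rfl
  refine ⟨S, ⟨hSM, hstable, hcomm, hcent⟩, ?_, ?_⟩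
  · refine (isSimpleGroup_iff _).2 ⟨(Subgroup.nontrivial_iff_ne_bot S).2 hS1, fun N hN => ?_⟩
    -- A normal subgroup of `S` is centralized by the other factors, hence normal in `M`.
    have hM : M ≤ Subgroup.normalizer ((N.map S.subtype : Subgroup G) : Set G) := by
      apply hsup
      intro g
      by_cases hg : MulAut.conj g • S = S
      · rw [hg]
        intro s hs
        have h1 : ∀ s ∈ S, ∀ x ∈ N.map S.subtype, s * x * s⁻¹ ∈ N.map S.subtype := by
          rintro s hs _ ⟨x, hx, rfl⟩
          exact ⟨⟨s, hs⟩ * x * ⟨s, hs⟩⁻¹, hN.conj_mem x hx _, rfl⟩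
        rw [Subgroup.mem_normalizer_iff]
        intro x
        refine ⟨h1 s hs x, fun h => ?_⟩
        simpa [mul_assoc] using h1 s⁻¹ (S.inv_mem hs) _ h
      · intro y hy
        rw [Subgroup.mem_normalizer_iff]
        have h2 : ∀ x ∈ N.map S.subtype, y * x * y⁻¹ = x := by
          rintro _ ⟨x, hx, rfl⟩
          exact mul_inv_eq_iff_eq_mul.2 (hcomm g hg x x.2 y hy).eq.symm
        intro x
        refine ⟨fun h => by rwa [h2 x h], fun h => ?_⟩
        have h3 := h2 _ h
        have h4 : y * x * y⁻¹ = x := by simpa using h3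
        rwa [h4] at h
    rcases key (N.map S.subtype) (by rintro _ ⟨x, -, rfl⟩; exact x.2)
      (fun m hm x hx => (Subgroup.mem_normalizer_iff.1 (hM hm) x).1 hx) with h | h
    · left
      exact (Subgroup.map_eq_bot_iff_of_injective _ S.subtype_injective).1 h
    · right
      apply Subgroup.map_injective S.subtype_injective
      rw [h, ← MonoidHom.range_eq_map, Subgroup.range_subtype]
  · let ι := Set.range (fun g : G => MulAut.conj g • S)
    have : Fintype ι := Fintype.ofFinite _
    have hpw : Pairwise fun i j : ι => ∀ x y : G, x ∈ i.1 → y ∈ j.1 → Commute x y := by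
      rintro ⟨_, a, rfl⟩ ⟨_, b, rfl⟩ hij x y hx hy
      have h1 := mem_conj_smul.1 hx
      have h2 : a⁻¹ * y * a ∈ MulAut.conj (a⁻¹ * b) • S := by
        rw [mem_conj_smul] at hy ⊢
        simpa [mul_assoc] using hy
      have h3 : MulAut.conj (a⁻¹ * b) • S ≠ S := by
        intro h
        apply hij
        apply Subtype.ext
        change MulAut.conj a • S = MulAut.conj b • S
        conv_lhs => rw [← h, conj_smul_conj_smul, mul_inv_cancel_left]
      have h4 := hcomm _ h3 _ h1 _ h2
      simpa [mul_assoc] using ((Commute.conj_iff a).2 h4)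
    have hdvd : p ∣ Nat.card ((i : ι) → i.1) := by
      have h1 : M ≤ (Subgroup.noncommPiCoprod hpw).range := by
        apply hsup
        intro g
        rw [Subgroup.noncommPiCoprod_range]
        exact le_iSup (fun i : ι => i.1) ⟨_, g, rfl⟩
      exact (hp.trans (Subgroup.card_dvd_of_le h1)).trans (Subgroup.card_range_dvd _)
    rw [Nat.card_pi, (Fact.out : p.Prime).prime.dvd_finsetProd_iff] at hdvd
    obtain ⟨⟨_, a, rfl⟩, -, h⟩ := hdvd
    rwa [← Nat.card_congr (Subgroup.equivSMul (MulAut.conj a) S).toEquiv] at h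

theorem isCompositionFactorOf_of_normal {G : Type u} [Group G] {M S : Subgroup G} (hle : S ≤ M)
    (hn : ∀ m ∈ M, ∀ x ∈ S, m * x * m⁻¹ ∈ S) [IsSimpleGroup S] :
    IsCompositionFactorOf S M := by
  have e : S ≃* (S.subgroupOf M) ⧸ (⊥ : Subgroup (S.subgroupOf M)) :=
    (Subgroup.subgroupOfEquivOfLe hle).symm.trans QuotientGroup.quotientBot.symm
  refine ⟨S.subgroupOf M, ⊥, inferInstance, ⟨1, ![S.subgroupOf M, ⊤], rfl, rfl, ?_⟩,
    e.symm.isSimpleGroup, ⟨e⟩⟩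
  intro i
  have hnm : (S.subgroupOf M).Normal := ⟨fun x hx m => hn m m.2 x hx⟩
  fin_cases i
  refine ⟨le_top, ?_⟩
  change ((S.subgroupOf M).subgroupOf ⊤).Normal
  infer_instance

/-! ### Moving `p`-elements into `P` -/

/-- A `p`-element of `Mt`, where `t ∈ P`, is moved into `(M ∩ P)t` by an element of `M`: by Sylow
in `MP = PM`. -/
theorem exists_isConj_mem_coset {G : Type u} [Group G] [Finite G] (p : ℕ) [Fact p.Prime]
    (P : Sylow p G) (M : Subgroup G) [hMn : M.Normal] {t s : G} (htP : t ∈ P) (hs : s ∈ M)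
    (hy : ∃ k, (s * t) ^ p ^ k = 1) :
    ∃ m ∈ M ⊓ (P : Subgroup G), IsConj (s * t) (m * t) := by
  have hPL : (P : Subgroup G) ≤ M ⊔ P := le_sup_right
  have hyL : s * t ∈ M ⊔ (P : Subgroup G) :=
    Subgroup.mul_mem _ (Subgroup.mem_sup_left hs) (Subgroup.mem_sup_right htP)
  have hpg : IsPGroup p (Subgroup.zpowers (⟨s * t, hyL⟩ : ↥(M ⊔ (P : Subgroup G)))) := by
    obtain ⟨k, hk⟩ := hy
    have : orderOf (⟨s * t, hyL⟩ : ↥(M ⊔ (P : Subgroup G))) ∣ p ^ k :=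
      orderOf_dvd_of_pow_eq_one (Subtype.ext hk)
    obtain ⟨j, -, hj⟩ := (Nat.dvd_prime_pow Fact.out).1 this
    exact IsPGroup.of_card (n := j) (by rw [Nat.card_zpowers, hj])
  obtain ⟨Q, hQ⟩ := hpg.exists_le_sylow
  obtain ⟨l, hl⟩ := MulAction.exists_smul_eq ↥(M ⊔ (P : Subgroup G)) (P.subtype hPL) Q
  have h1 : (⟨s * t, hyL⟩ : ↥(M ⊔ (P : Subgroup G))) ∈ (Q : Subgroup _) :=
    hQ (Subgroup.mem_zpowers _)
  rw [← hl, Sylow.coe_subgroup_smul, mem_conj_smul] at h1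
  have h2 : (l : G)⁻¹ * (s * t) * l ∈ (P : Subgroup G) := h1
  obtain ⟨m, hm, q, hq, hmq⟩ := Subgroup.mem_sup_of_normal_left.1 l.2
  have h3 : m⁻¹ * (s * t) * m ∈ (P : Subgroup G) := by
    have := Subgroup.mul_mem _ (Subgroup.mul_mem _ hq h2) (Subgroup.inv_mem _ hq)
    rw [← hmq] at this
    simpa [mul_assoc] using this
  refine ⟨m⁻¹ * (s * t) * m * t⁻¹, ⟨?_, Subgroup.mul_mem _ h3 (Subgroup.inv_mem _ htP)⟩, ?_⟩
  · have := M.mul_mem (M.mul_mem (M.inv_mem hm) hs) (hMn.conj_mem m hm t)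
    simpa [mul_assoc] using this
  · rw [isConj_iff]
    exact ⟨m⁻¹, by simp⟩

/-! ### The action of `st` on the factors -/

section PowerMap

variable {G : Type u} [Group G] {M S : Subgroup G} {s t : G}

/-- As long as the `t`-translates of a factor `T` avoid `S`, the element `st` moves the points of
`T` exactly as `t` does. -/
theorem IsFactorOf.pow_conj_eq (hF : IsFactorOf M S) (hs : s ∈ S) (g : G) {u : G}
    (hu : u ∈ MulAut.conj g • S) (n : ℕ)
    (hn : ∀ k < n, MulAut.conj (t ^ (k + 1)) • MulAut.conj g • S ≠ S) :
    (s * t) ^ n * u * ((s * t) ^ n)⁻¹ = t ^ n * u * (t ^ n)⁻¹ := by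
  induction n with
  | zero => simp
  | succ n ih =>
    have h1 := ih (fun k hk => hn k (by omega))
    have h2 := hn n (by omega)
    have h3 : t ^ (n + 1) * u * (t ^ (n + 1))⁻¹ ∈
        MulAut.conj (t ^ (n + 1)) • MulAut.conj g • S := conj_mem_conj_smul hu
    rw [conj_smul_conj_smul] at h2 h3
    have h4 := hF.comm _ h2 s hs _ h3
    calc (s * t) ^ (n + 1) * u * ((s * t) ^ (n + 1))⁻¹
        = s * t * ((s * t) ^ n * u * ((s * t) ^ n)⁻¹) * (s * t)⁻¹ := by
          rw [pow_succ']; simp only [mul_inv_rev, mul_assoc]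
      _ = s * (t ^ (n + 1) * u * (t ^ (n + 1))⁻¹) * s⁻¹ := by
          rw [h1, pow_succ']; simp only [mul_inv_rev, mul_assoc]
      _ = _ := by rw [h4.eq, mul_inv_cancel_right]

theorem exists_pow_eq_mul_pow [hM : M.Normal] (hs : s ∈ M) (j : ℕ) :
    ∃ m ∈ M, (s * t) ^ j = m * t ^ j := by
  induction j with
  | zero => exact ⟨1, M.one_mem, by simp⟩
  | succ j ih =>
    obtain ⟨m, hm, h⟩ := ih
    refine ⟨m * (t ^ j * s * (t ^ j)⁻¹), M.mul_mem hm (hM.conj_mem s hs _), ?_⟩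
    rw [pow_succ, h, pow_succ]
    simp [mul_assoc]

/-- `M` normalizes each factor, so `st` permutes the factors as `t` does. -/
theorem IsFactorOf.pow_smul_eq [M.Normal] (hF : IsFactorOf M S) (hs : s ∈ S) (j : ℕ) :
    MulAut.conj ((s * t) ^ j) • S = MulAut.conj (t ^ j) • S := by
  obtain ⟨m, hm, h⟩ := exists_pow_eq_mul_pow (t := t) (hF.le hs) j
  rw [h, ← conj_smul_conj_smul, hF.stable m hm]

/-- If `r` is the length of the `t`-orbit of `S`, then `(st)^r` acts on `S` as `s` times the
`r`-th power of `t`. -/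
theorem IsFactorOf.pow_period_conj (hF : IsFactorOf M S) (hs : s ∈ S) {r : ℕ} (hr : 0 < r)
    (hmin : ∀ k, 0 < k → k < r → MulAut.conj (t ^ k) • S ≠ S) {x : G} (hx : x ∈ S) :
    (s * t) ^ r * x * ((s * t) ^ r)⁻¹ = s * (t ^ r * x * (t ^ r)⁻¹) * s⁻¹ := by
  obtain ⟨n, rfl⟩ : ∃ n, r = n + 1 := ⟨r - 1, by omega⟩
  have h1 := hF.pow_conj_eq (t := t) hs 1 (u := x) (by simpa using hx) n
    (fun k hk => by simpa using hmin (k + 1) (by omega) (by omega))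
  calc (s * t) ^ (n + 1) * x * ((s * t) ^ (n + 1))⁻¹
      = s * t * ((s * t) ^ n * x * ((s * t) ^ n)⁻¹) * (s * t)⁻¹ := by
        rw [pow_succ']; simp only [mul_inv_rev, mul_assoc]
    _ = _ := by
        rw [h1, pow_succ']; simp only [mul_inv_rev, mul_assoc]

theorem pow_mul_conj_eq {r : ℕ} {y : G} {g : MulAut S}
    (hy : ∀ x : S, y ^ r * x * (y ^ r)⁻¹ = g x) (k : ℕ) (x : S) :
    y ^ (r * k) * x * (y ^ (r * k))⁻¹ = (g ^ k) x := by
  induction k with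
  | zero => simp
  | succ k ih =>
    calc y ^ (r * (k + 1)) * x * (y ^ (r * (k + 1)))⁻¹
        = y ^ r * (y ^ (r * k) * x * (y ^ (r * k))⁻¹) * (y ^ r)⁻¹ := by
          rw [Nat.mul_succ, add_comm, pow_add]; simp only [mul_inv_rev, mul_assoc]
      _ = _ := by rw [ih, hy, pow_succ']; rfl

/-- If `(st)^r` acts on `S` as a `p`-element, then `st` is a `p`-element: a suitable power
`(st)^(p^c)` centralizes the factors in the `t`-orbit of `S`, and it centralizes the others because
there `st` acts as `t`; a further power lies in `M ∩ C(M) = 1`. -/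
theorem IsFactorOf.exists_pow_eq_one [M.Normal] (hF : IsFactorOf M S)
    (hZ : M ⊓ Subgroup.centralizer (M : Set G) = ⊥) (hs : s ∈ S) {p a b k : ℕ}
    (hp : 0 < p)     (ht : t ^ p ^ a = 1) {g : MulAut S} (hg : g ^ p ^ k = 1)
    (hy : ∀ x : S, (s * t) ^ p ^ b * x * ((s * t) ^ p ^ b)⁻¹ = g x) :
    ∃ c, (s * t) ^ p ^ c = 1 := by
  set y := s * t with hydef
  -- `y ^ p ^ (b + k + a)` centralizes every factor.
  have hcent : ∀ m ∈ M, Commute (y ^ p ^ (b + k + a)) m := by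
    refine hF.cent _ fun c u hu => ?_
    suffices h : y ^ p ^ (b + k + a) * u * (y ^ p ^ (b + k + a))⁻¹ = u from
      mul_inv_eq_iff_eq_mul.1 h
    by_cases hc : ∃ n, MulAut.conj (t ^ (n + 1)) • MulAut.conj c • S = S
    · -- then the factor is `y ^ j • S` for some `j : ℕ`, as `t` has finite order
      obtain ⟨n, hn⟩ := hc
      have hj : ∃ j, MulAut.conj c • S = MulAut.conj (y ^ j) • S := by
        have hp0 : 0 < p ^ a := pow_pos hp a
        refine ⟨(n + 1) * (p ^ a - 1), ?_⟩
        rw [hF.pow_smul_eq hs]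
        conv_rhs => rw [← hn]
        rw [conj_smul_conj_smul, conj_smul_conj_smul, ← pow_add, ← Nat.mul_succ,
          Nat.succ_eq_add_one, Nat.sub_add_cancel hp0, mul_comm (n + 1), pow_mul, ht]
        simp
      obtain ⟨j, hj⟩ := hj
      rw [hj, mem_conj_smul] at hu
      have h1 := pow_mul_conj_eq hy (p ^ k * p ^ a) ⟨_, hu⟩
      rw [pow_mul g, hg, one_pow, ← mul_assoc (p ^ b), ← pow_add, ← pow_add] at h1
      have h2 : Commute (y ^ p ^ (b + k + a)) ((y ^ j)⁻¹ * u * y ^ j) :=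
        mul_inv_eq_iff_eq_mul.1 h1
      have h3 : Commute (y ^ p ^ (b + k + a)) (y ^ j) := (Commute.refl y).pow_pow _ _
      have h4 := (h3.mul_right h2).mul_right h3.inv_right
      have h5 : y ^ j * ((y ^ j)⁻¹ * u * y ^ j) * (y ^ j)⁻¹ = u := by group
      rw [h5] at h4
      exact mul_inv_eq_iff_eq_mul.2 h4
    · push Not at hc
      rw [hF.pow_conj_eq hs c hu _ (fun k _ => hc k), add_comm, pow_add, pow_mul, ht]
      simp
  refine ⟨b + k + a + a, ?_⟩
  rw [← Subgroup.mem_bot, ← hZ]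
  refine Subgroup.mem_inf.2 ⟨?_, ?_⟩
  · obtain ⟨m, hm, h⟩ := exists_pow_eq_mul_pow (t := t) (hF.le hs) (p ^ (b + k + a + a))
    rw [hydef, h, add_comm, pow_add, pow_mul, ht]
    simpa using hm
  · rw [Subgroup.mem_centralizer_iff]
    intro m hm
    rw [pow_add p (b + k + a), pow_mul]
    exact ((hcent m hm).pow_left _).eq.symm

/-! ### A conjugacy invariant -/

/-- The embeddings of `S` onto one of its conjugates that carry a fixed automorphism `g` of `S` to
the action of `y ^ r`.  Up to conjugation by an element of `G`, this set depends only on the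
conjugacy class of `y`. -/
def markings (S : Subgroup G) (r : ℕ) (g : MulAut S) (y : G) : Set (S →* G) :=
  {φ | (∃ c : G, φ.range = MulAut.conj c • S) ∧ Function.Injective φ ∧
    ∀ x, y ^ r * φ x * (y ^ r)⁻¹ = φ (g x)}

theorem ncard_markings_le [Finite G] (S : Subgroup G) (r : ℕ) (g : MulAut S) {y z : G}
    (h : IsConj y z) : (markings S r g y).ncard ≤ (markings S r g z).ncard := by
  obtain ⟨c, rfl⟩ := isConj_iff.1 h
  have : Finite (S →* G) := Finite.of_injective _ DFunLike.coe_injective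
  refine Set.ncard_le_ncard_of_injOn (fun φ => (MulAut.conj c).toMonoidHom.comp φ) ?_ ?_
    (Set.toFinite _)
  · rintro φ ⟨⟨d, hd⟩, hinj, hφ⟩
    refine ⟨⟨c * d, ?_⟩, (MulAut.conj c).injective.comp hinj, fun x => ?_⟩
    · rw [MonoidHom.range_comp, hd, ← conj_smul_conj_smul]
      rfl
    · simp only [MonoidHom.comp_apply, MulEquiv.toMonoidHom_eq_coe, MonoidHom.coe_coe,
        MulAut.conj_apply, ← hφ, conj_pow]
      group
  · intro φ _ ψ _ h
    ext x
    have := DFunLike.congr_fun h x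
    simpa using this

/-- If `(s₁t)^r` and `(s₂t)^r` act on `S` as nonconjugate automorphisms, then `s₁t` and `s₂t` are
not conjugate in `G`: they act alike on the factors outside the `t`-orbit of `S`, while only `s₁t`
induces the class of `g₁` on the factors of this orbit. -/
theorem IsFactorOf.not_isConj [Finite G] [M.Normal] (hF : IsFactorOf M S) {s₁ s₂ : G}
    (hs₁ : s₁ ∈ S) (hs₂ : s₂ ∈ S) {r : ℕ} {g₁ g₂ : MulAut S}
    (h₁ : ∀ x : S, (s₁ * t) ^ r * x * ((s₁ * t) ^ r)⁻¹ = g₁ x)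
    (h₂ : ∀ x : S, (s₂ * t) ^ r * x * ((s₂ * t) ^ r)⁻¹ = g₂ x) (hg : ¬ IsConj g₁ g₂) :
    ¬ IsConj (s₁ * t) (s₂ * t) := by
  intro hc
  have : Finite (S →* G) := Finite.of_injective _ DFunLike.coe_injective
  refine (ncard_markings_le S r g₁ hc).not_gt (Set.ncard_lt_ncard ?_ (Set.toFinite _))
  -- a marking onto a factor in the orbit of `S` would conjugate `g₁` to `g₂`
  have horb : ∀ φ ∈ markings S r g₁ (s₂ * t), ∀ j : ℕ, φ.range ≠ MulAut.conj (t ^ j) • S := by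
    rintro φ ⟨-, hinj, hφ⟩ j hj
    rw [← hF.pow_smul_eq hs₂] at hj
    set y := s₂ * t with hy
    let ψ : S →* S := ((MulAut.conj (y ^ j)⁻¹).toMonoidHom.comp φ).codRestrict S (fun x => by
      have : φ x ∈ MulAut.conj (y ^ j) • S := hj ▸ ⟨x, rfl⟩
      rw [mem_conj_smul] at this
      simpa [-map_inv, -map_pow] using this)
    have hψ : ∀ x, (ψ x : G) = (y ^ j)⁻¹ * φ x * y ^ j := fun x => by
      simp [ψ, -map_inv, -map_pow]
    have hψinj : Function.Injective ψ := by
      intro a b hab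
      apply hinj
      have := congrArg Subtype.val hab
      rw [hψ, hψ] at this
      simpa using this
    let e : MulAut S := MulEquiv.ofBijective ψ (Finite.injective_iff_bijective.1 hψinj)
    apply hg
    rw [isConj_iff]
    refine ⟨e, ?_⟩
    rw [mul_inv_eq_iff_eq_mul]
    ext x
    have e1 : ((e * g₁) x : G) = ψ (g₁ x) := rfl
    have e2 : ((g₂ * e) x : G) = g₂ (ψ x) := rfl
    rw [e1, e2, hψ, ← h₂, hψ, ← hφ]
    have h3 : Commute (y ^ r) (y ^ j) := (Commute.refl y).pow_pow _ _
    calc (y ^ j)⁻¹ * (y ^ r * φ x * (y ^ r)⁻¹) * y ^ j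
        = ((y ^ j)⁻¹ * y ^ r) * φ x * ((y ^ r)⁻¹ * y ^ j) := by simp only [mul_assoc]
      _ = (y ^ r * (y ^ j)⁻¹) * φ x * (y ^ j * (y ^ r)⁻¹) := by
        rw [h3.symm.inv_left.eq, h3.inv_left.eq]
      _ = _ := by simp only [mul_assoc]
  rw [Set.ssubset_iff_exists]
  refine ⟨fun φ hφ => ?_, S.subtype, ⟨⟨1, by simp⟩, S.subtype_injective, h₁⟩, fun h => ?_⟩
  · have hφ' := horb φ hφ
    obtain ⟨⟨c, hc⟩, hinj, hφ⟩ := hφ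
    refine ⟨⟨c, hc⟩, hinj, fun x => ?_⟩
    have hne : ∀ k < r, MulAut.conj (t ^ (k + 1)) • MulAut.conj c • S ≠ S := by
      intro k _ hk
      have ht := isOfFinOrder_of_finite t
      obtain ⟨j, hj⟩ : ∃ j : ℕ, t ^ j = (t ^ (k + 1))⁻¹ := by
        have : (t ^ (k + 1))⁻¹ ∈ Submonoid.powers t := by
          rw [ht.mem_powers_iff_mem_zpowers]
          exact inv_mem (pow_mem (Subgroup.mem_zpowers t) _)
        exact this
      apply hφ' j
      rw [hc, hj]
      conv_rhs => rw [← hk]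
      simp
    have hx : φ x ∈ MulAut.conj c • S := hc ▸ ⟨x, rfl⟩
    rw [← hφ, hF.pow_conj_eq hs₁ c hx r hne, hF.pow_conj_eq hs₂ c hx r hne]
  · exact horb _ h 0 (by simp)

end PowerMap

/-! ### Compliance and conclusion -/

/-- Compliance gives two nonconjugate `p`-elements in every coset of `Inn S` containing a
`p`-element: for the trivial coset take `1` and an inner automorphism of order `p`. -/
theorem IsPCompliant.exists_pair {S : Type u} [Group S] [Finite S] {p : ℕ} [Fact p.Prime]
    (hc : IsPCompliant p S) (hp : p ∣ Nat.card S) (hZ : Subgroup.center S = ⊥) (h : MulAut S)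
    (hh : ∃ k, orderOf h = p ^ k) :
    ∃ s₁ s₂ : S, (∃ k, (MulAut.conj s₁ * h) ^ p ^ k = 1) ∧
      (∃ k, (MulAut.conj s₂ * h) ^ p ^ k = 1) ∧
      ¬ IsConj (MulAut.conj s₁ * h) (MulAut.conj s₂ * h) := by
  by_cases hi : h ∈ (MulAut.conj : S →* MulAut S).range
  · obtain ⟨a, rfl⟩ := hi
    obtain ⟨x, hx⟩ := exists_prime_orderOf_dvd_card' p hp
    refine ⟨a⁻¹, x * a⁻¹, ⟨0, by simp⟩, ⟨1, ?_⟩, ?_⟩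
    · rw [← map_mul, inv_mul_cancel_right, ← map_pow, pow_one, ← hx, pow_orderOf_eq_one, map_one]
    · rw [← map_mul, ← map_mul, inv_mul_cancel_right, inv_mul_cancel, map_one, isConj_one_right]
      intro h1
      have hxZ : x ∈ Subgroup.center S := by
        rw [Subgroup.mem_center_iff]
        intro g
        have := DFunLike.congr_fun h1 g
        simp only [MulAut.conj_apply, MulAut.one_apply] at this
        exact (mul_inv_eq_iff_eq_mul.1 this).symm
      rw [hZ, Subgroup.mem_bot] at hxZ
      rw [hxZ, orderOf_one] at hx
      exact (Fact.out : p.Prime).one_lt.ne hx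
  · rcases hc with hc | hc
    · exact absurd hp hc
    · obtain ⟨g₁, g₂, ⟨s₁, e₁⟩, ⟨s₂, e₂⟩, ⟨k₁, hk₁⟩, ⟨k₂, hk₂⟩, hg⟩ := hc h hi hh
      have e₁' := eq_mul_inv_iff_mul_eq.1 e₁
      have e₂' := eq_mul_inv_iff_mul_eq.1 e₂
      refine ⟨s₁, s₂, ⟨k₁, ?_⟩, ⟨k₂, ?_⟩, ?_⟩
      · rw [e₁', ← hk₁, pow_orderOf_eq_one]
      · rw [e₂', ← hk₂, pow_orderOf_eq_one]
      · rwa [e₁', e₂']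

/-- Lemma 3.7: let `G` be finite, `P` a `p`-Sylow subgroup, `M` a perfect minimal
normal subgroup of order divisible by `p` all of whose composition factors are
`p`-compliant.  If `t ∈ P \ M` then the coset `(M ∩ P)t` contains an element
not conjugate to `t`. -/
theorem stmt8 {G : Type u} [Group G] [Fintype G] (p : ℕ) [Fact p.Prime]
    (P : Sylow p G) (M : Subgroup G) [M.Normal]
    (hperf : ⁅M, M⁆ = M) (hnontriv : M ≠ ⊥)
    (hmin : ∀ B : Subgroup G, B.Normal → B ≤ M → B = ⊥ ∨ B = M)
    (hp : p ∣ Nat.card M)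
    (hcf : ∀ (Q : Type u) [Group Q], IsCompositionFactorOf Q M → IsPCompliant p Q)
    (t : G) (htP : t ∈ P) (htM : t ∉ M) :
    ∃ m ∈ M ⊓ (P : Subgroup G), ¬ IsConj t (m * t) := by
  have hZ := inf_centralizer_eq_bot M hperf hnontriv hmin
  obtain ⟨S, hF, hsimple, hpS⟩ := exists_factor p M hnontriv hmin hp
  have hSn : ∀ m ∈ M, ∀ x ∈ S, m * x * m⁻¹ ∈ S := by
    intro m hm x hx
    have h := hF.stable m hm 1
    simp only [map_one, one_smul] at h
    rw [← h]
    exact conj_mem_conj_smul hx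
  have hcomp := hcf S (isCompositionFactorOf_of_normal hF.le hSn)
  have hZS : Subgroup.center S = ⊥ := by
    rw [eq_bot_iff]
    intro z hz
    rw [Subgroup.mem_bot, ← Subtype.coe_inj, S.coe_one, ← Subgroup.mem_bot, ← hZ]
    refine Subgroup.mem_inf.2 ⟨hF.le z.2, ?_⟩
    rw [Subgroup.mem_centralizer_iff]
    refine fun m hm => (hF.cent z (fun g x hx => ?_) m hm).eq.symm
    by_cases hg : MulAut.conj g • S = S
    · rw [hg] at hx
      exact congrArg Subtype.val (Subgroup.mem_center_iff.1 hz ⟨x, hx⟩).symm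
    · exact hF.comm g hg z z.2 x hx
  obtain ⟨a, ha⟩ : ∃ a, t ^ p ^ a = 1 := by
    obtain ⟨a, ha⟩ := P.isPGroup' ⟨t, htP⟩
    exact ⟨a, congrArg Subtype.val ha⟩
  set r := MulAction.period (MulAut.conj t) S with hr
  have hrdvd : r ∣ p ^ a := by
    refine (MulAction.period_dvd_orderOf _ _).trans (orderOf_dvd_of_pow_eq_one ?_)
    rw [← map_pow, ha, map_one]
  obtain ⟨b, -, hb⟩ := (Nat.dvd_prime_pow Fact.out).1 hrdvd
  have hrpos : 0 < r := hb ▸ pow_pos (Fact.out : p.Prime).pos b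
  have hrmin : ∀ k, 0 < k → k < r → MulAut.conj (t ^ k) • S ≠ S := by
    intro k hk0 hkr h
    rw [map_pow, MulAction.pow_smul_eq_iff_period_dvd] at h
    exact (Nat.le_of_dvd hk0 h).not_gt hkr
  have hrS : MulAut.conj (t ^ r) • S = S := by
    rw [map_pow]
    exact MulAction.pow_period_smul _ _
  have hnorm : t ^ r ∈ Subgroup.normalizer (S : Set G) := by
    rw [Subgroup.mem_normalizer_iff]
    intro x
    conv_rhs => rw [← hrS, mem_conj_smul]
    simp [mul_assoc]
  let h : MulAut S := S.normalizerMonoidHom ⟨t ^ r, hnorm⟩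
  have hh : ∃ k, orderOf h = p ^ k := by
    have h1 : h ^ p ^ a = 1 := by
      rw [← map_pow]
      convert map_one S.normalizerMonoidHom
      apply Subtype.ext
      change (t ^ r) ^ p ^ a = 1
      rw [← pow_mul, mul_comm, pow_mul, ha, one_pow]
    obtain ⟨k, -, hk⟩ := (Nat.dvd_prime_pow Fact.out).1 (orderOf_dvd_of_pow_eq_one h1)
    exact ⟨k, hk⟩
  obtain ⟨s₁, s₂, ⟨k₁, hk₁⟩, ⟨k₂, hk₂⟩, hg⟩ := hcomp.exists_pair hpS hZS h hh
  have hact : ∀ s x : S, ((s : G) * t) ^ r * x * (((s : G) * t) ^ r)⁻¹ =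
      (MulAut.conj s * h) x := by
    intro s x
    rw [hF.pow_period_conj s.2 hrpos hrmin x.2]
    rfl
  have hnc := hF.not_isConj s₁.2 s₂.2 (hact s₁) (hact s₂) hg
  have hy : ∀ s : S, ∀ k, (MulAut.conj s * h) ^ p ^ k = 1 → ∃ c, ((s : G) * t) ^ p ^ c = 1 :=
    fun s k hk => hF.exists_pow_eq_one hZ s.2 (b := b) (Fact.out : p.Prime).pos ha hk (hb ▸ hact s)
  obtain ⟨m₁, hm₁, hc₁⟩ := exists_isConj_mem_coset p P M htP (hF.le s₁.2) (hy s₁ k₁ hk₁)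
  obtain ⟨m₂, hm₂, hc₂⟩ := exists_isConj_mem_coset p P M htP (hF.le s₂.2) (hy s₂ k₂ hk₂)
  by_contra! hall
  exact hnc (hc₁.trans ((hall m₁ hm₁).symm.trans ((hall m₂ hm₂).trans hc₂.symm)))
end

section
/- Let L be a finite group, K a normal subgroup of L, and u ∈ L. Then for each integer n ≥ 1, the number of elements y in the coset Ku with y^n = 1 is a multiple of gcd(|K|, n). -/
/-!
It suffices to show that every prime power `q = p ^ k` dividing both `|K|` and `n` divides the
number of solutions. Fix a subgroup `U ≤ K` of order `q`, and for `x : L` let `core U x` be the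
largest subgroup `D` of `U` with `x D x⁻¹ ≤ D`.

* If `x` is a solution then so is every element of `D x` (`mul_pow_eq_one`). Indeed `|D| ∣ q ∣ n`;
  write `n = |D| m`. For `d ∈ D` the elements `x ^ m` and `(d x) ^ m` lie in the same coset of `D`
  inside the `p`-group `D ⟨x ^ m⟩`, and in a `p`-group two elements that agree modulo a normal
  subgroup of order `p ^ a` have the same `p ^ a`-th power (`pow_card_eq`), by induction on `a`
  through a central subgroup of order `p`.
* The sets `v (core U x) x v⁻¹`, for `v ∈ U`, are the translates of `(core U x) x` under conjugation
  by `U`; two of them meet only if they are indexed by the same left coset of `core U x` in `U`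
  (`mem_core_of_conj`). Hence their union has `[U : D] |D| = |U| = q` elements. These unions are
  the classes of an equivalence relation on `L` (`coreSetoid`), and the solutions in `K u` form a
  union of classes.
-/

/-- In a finite `p`-group, elements congruent modulo a normal subgroup `D` have the same
`|D|`-th power. -/
theorem pow_card_eq {p : ℕ} [Fact p.Prime] (a : ℕ) :
    ∀ {G : Type*} [Group G] [Finite G] (_ : IsPGroup p G) (D : Subgroup G) [D.Normal]
      (_ : Nat.card D = p ^ a) (g d : G) (_ : d ∈ D), (d * g) ^ p ^ a = g ^ p ^ a := by
  induction a with
  | zero =>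
    intro G _ _ _ D _ hD g d hd
    rw [pow_zero, Subgroup.card_eq_one] at hD
    subst hD
    rw [Subgroup.mem_bot] at hd
    simp [hd]
  | succ a ih =>
    intro G _ _ hG D _ hD g d hd
    have hp : p.Prime := Fact.out
    -- `G` acts on `D` by conjugation, and the number of fixed points is divisible by `p`.
    obtain ⟨z, hz, hz1⟩ : ∃ z ∈ MulAction.fixedPoints (ConjAct G) D, (1 : D) ≠ z := by
      have hG' : IsPGroup p (ConjAct G) := hG.of_equiv ConjAct.toConjAct
      refine hG'.exists_fixed_point_of_prime_dvd_card_of_fixed_point D ?_ ?_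
      · rw [hD]; exact dvd_pow_self p (Nat.succ_ne_zero a)
      · intro g; simp
    have hzc : ∀ x : G, x * z = z * x := by
      intro x
      have h := congrArg Subtype.val (hz (ConjAct.toConjAct x))
      rw [ConjAct.Subgroup.val_conj_smul, ConjAct.toConjAct_smul] at h
      exact mul_inv_eq_iff_eq_mul.mp h
    -- A suitable power of the fixed point `z` has order exactly `p`.
    obtain ⟨w, hwD, hwc, hwo⟩ : ∃ w ∈ D, (∀ x : G, x * w = w * x) ∧ orderOf w = p := by
      obtain ⟨k, hk⟩ := (IsPGroup.iff_orderOf.mp hG) (z : G)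
      have hk0 : k ≠ 0 := by
        rintro rfl
        rw [pow_zero, orderOf_eq_one_iff] at hk
        exact hz1 (Subtype.ext hk.symm)
      refine ⟨(z : G) ^ (orderOf (z : G) / p), D.pow_mem z.2 _, fun x => ?_, ?_⟩
      · exact Commute.pow_right (hzc x) _
      · exact orderOf_pow_orderOf_div (orderOf_pos _).ne' (hk ▸ dvd_pow_self p hk0)
    let Z : Subgroup G := Subgroup.zpowers w
    have hZc : ∀ y ∈ Z, ∀ x : G, Commute x y := by
      rintro y ⟨i, rfl⟩ x
      exact Commute.zpow_right (hwc x) i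
    have hZD : Z ≤ D := by
      rw [Subgroup.zpowers_le]; exact hwD
    have hZn : Z.Normal := ⟨fun y hy x => by
      rw [(hZc y hy x).eq, mul_inv_cancel_right]; exact hy⟩
    have hZcard : Nat.card Z = p := by rw [Nat.card_zpowers, hwo]
    let D' : Subgroup (G ⧸ Z) := D.map (QuotientGroup.mk' Z)
    have hD'n : D'.Normal := Subgroup.Normal.map inferInstance _ (QuotientGroup.mk'_surjective Z)
    have hD'card : Nat.card D' = p ^ a := by
      have h1 := (Z.subgroupOf D).card_mul_index
      rw [Nat.card_congr (Subgroup.subgroupOfEquivOfLe hZD).toEquiv, hZcard, hD, pow_succ'] at h1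
      rw [← Subgroup.relIndex_ker, QuotientGroup.ker_mk']
      exact Nat.eq_of_mul_eq_mul_left hp.pos h1
    have key := ih (hG.to_quotient Z) D' hD'card (g : G ⧸ Z) (d : G ⧸ Z)
      (Subgroup.mem_map_of_mem _ hd)
    rw [← QuotientGroup.mk_mul, ← QuotientGroup.mk_pow, ← QuotientGroup.mk_pow, eq_comm,
      QuotientGroup.eq] at key
    set y := (g ^ p ^ a)⁻¹ * (d * g) ^ p ^ a with hy
    have hyp : y ^ p = 1 := by
      have := congrArg Subtype.val (pow_card_eq_one' (x := (⟨y, key⟩ : Z)))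
      rwa [hZcard] at this
    have h2 : (d * g) ^ p ^ a = g ^ p ^ a * y := by rw [hy]; group
    rw [pow_succ, pow_mul, h2, (hZc y key _).mul_pow, hyp, mul_one, ← pow_mul]

theorem mul_pow_mul_inv_mem {G : Type*} [Group G] (D : Subgroup G) (g d : G)
    (hg : ∀ e ∈ D, g * e * g⁻¹ ∈ D) (hd : d ∈ D) (m : ℕ) : (d * g) ^ m * (g ^ m)⁻¹ ∈ D := by
  induction m with
  | zero => simp
  | succ m ih =>
    have : (d * g) ^ (m + 1) * (g ^ (m + 1))⁻¹ = d * (g * ((d * g) ^ m * (g ^ m)⁻¹) * g⁻¹) := by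
      rw [pow_succ', pow_succ']; group
    rw [this]
    exact D.mul_mem hd (hg _ ih)

/-- If `g` normalizes the `p`-subgroup `D` and `|D|` divides `n`, then `g ^ n = 1` forces all
elements of the coset `D g` to be solutions of `x ^ n = 1`. -/
theorem mul_pow_eq_one {G : Type*} [Group G] [Finite G] {p : ℕ} [Fact p.Prime] (D : Subgroup G)
    {a : ℕ} (hD : Nat.card D = p ^ a) (g d : G) (hg : ∀ e ∈ D, g * e * g⁻¹ ∈ D) (hd : d ∈ D)
    {n : ℕ} (hn : p ^ a ∣ n) (h1 : g ^ n = 1) : (d * g) ^ n = 1 := by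
  obtain ⟨m, rfl⟩ := hn
  have hgN : g ∈ Subgroup.normalizer (D : Set G) :=
    Subgroup.mem_normalizer_fintype hg
  have hhN : Subgroup.zpowers (g ^ m) ≤ Subgroup.normalizer (D : Set G) := by
    rw [Subgroup.zpowers_le]; exact Subgroup.pow_mem _ hgN m
  have hhp : IsPGroup p (Subgroup.zpowers (g ^ m)) := by
    refine IsPGroup.of_card_dvd_pow (n := a) ?_
    rw [Nat.card_zpowers]
    exact orderOf_dvd_of_pow_eq_one (by rw [← pow_mul, mul_comm, h1])
  have hDp : IsPGroup p D := IsPGroup.of_card hD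
  have hHp : IsPGroup p (D ⊔ Subgroup.zpowers (g ^ m) : Subgroup G) :=
    hDp.to_sup_of_normal_left' hhp hhN
  let H : Subgroup G := D ⊔ Subgroup.zpowers (g ^ m)
  have hDH : D ≤ H := le_sup_left
  have hgH : g ^ m ∈ H := (le_sup_right : _ ≤ H) (Subgroup.mem_zpowers _)
  have : (D.subgroupOf H).Normal := by
    rw [Subgroup.normal_subgroupOf_iff_le_normalizer hDH]
    exact sup_le Subgroup.le_normalizer hhN
  have hc : Nat.card (D.subgroupOf H) = p ^ a := by
    rw [← hD]; exact Nat.card_congr (Subgroup.subgroupOfEquivOfLe hDH).toEquiv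
  have he := mul_pow_mul_inv_mem D g d hg hd m
  have key := congrArg Subtype.val (pow_card_eq a hHp (D.subgroupOf H) hc ⟨g ^ m, hgH⟩
    ⟨_, hDH he⟩ he)
  simp only [Subgroup.coe_pow, Subgroup.coe_mul, inv_mul_cancel_right] at key
  rw [mul_comm, pow_mul, key, ← pow_mul, mul_comm, h1]

section Core

variable {L : Type*} [Group L] (U : Subgroup L)

/-- The largest subgroup `D` of `U` with `x D x⁻¹ ≤ D`. -/
def core (x : L) : Subgroup L where
  carrier := {d | ∀ i : ℕ, x ^ i * d * (x ^ i)⁻¹ ∈ U}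
  mul_mem' := by
    intro a b ha hb i
    have := U.mul_mem (ha i) (hb i)
    rwa [show x ^ i * a * (x ^ i)⁻¹ * (x ^ i * b * (x ^ i)⁻¹) = x ^ i * (a * b) * (x ^ i)⁻¹ by
      group] at this
  one_mem' := by intro i; simp
  inv_mem' := by
    intro a ha i
    have := U.inv_mem (ha i)
    rwa [show (x ^ i * a * (x ^ i)⁻¹)⁻¹ = x ^ i * a⁻¹ * (x ^ i)⁻¹ by group] at this

theorem core_le (x : L) : core U x ≤ U := fun d hd => by simpa using hd 0

theorem conj_mem_core {x d : L} (hd : d ∈ core U x) : x * d * x⁻¹ ∈ core U x := by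
  intro i
  have := hd (i + 1)
  rwa [pow_succ, show x ^ i * x * d * (x ^ i * x)⁻¹ = x ^ i * (x * d * x⁻¹) * (x ^ i)⁻¹ by
    group] at this

theorem le_core {x : L} {E : Set L} (hE : E ⊆ U) (hx : ∀ e ∈ E, x * e * x⁻¹ ∈ E) :
    E ⊆ core U x := by
  have key : ∀ i : ℕ, ∀ e ∈ E, x ^ i * e * (x ^ i)⁻¹ ∈ E := by
    intro i
    induction i with
    | zero => intro e he; simpa using he
    | succ i ih =>
      intro e he
      have := ih _ (hx e he)
      rwa [show x ^ i * (x * e * x⁻¹) * (x ^ i)⁻¹ = x ^ (i + 1) * e * (x ^ (i + 1))⁻¹ by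
        rw [pow_succ]; group] at this
  exact fun e he i => hE (key i e he)

theorem core_le_core_mul {x d : L} (hd : d ∈ core U x) : core U x ≤ core U (d * x) := by
  refine le_core U (core_le U x) fun e he => ?_
  rw [show d * x * e * (d * x)⁻¹ = d * (x * e * x⁻¹) * d⁻¹ by group]
  exact mul_mem (mul_mem hd (conj_mem_core U he)) (inv_mem hd)

theorem core_mul {x d : L} (hd : d ∈ core U x) : core U (d * x) = core U x := by
  refine le_antisymm ?_ (core_le_core_mul U hd)
  simpa using core_le_core_mul U (inv_mem (core_le_core_mul U hd hd))

theorem core_conj {x v d : L} (hv : v ∈ U) (hd : d ∈ core U x) :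
    v * d * v⁻¹ ∈ core U (v * x * v⁻¹) := by
  intro i
  rw [conj_pow, show v * x ^ i * v⁻¹ * (v * d * v⁻¹) * (v * x ^ i * v⁻¹)⁻¹ =
    v * (x ^ i * d * (x ^ i)⁻¹) * v⁻¹ by group]
  exact mul_mem (mul_mem hv (hd i)) (inv_mem hv)

/-- An element of `U` conjugating some element of the coset `(core U x) x` into the same coset
lies in `core U x`: it is contained in the double coset `D w D ⊆ U`, where `D = core U x`, and this
double coset is stable under conjugation by `x`. -/
theorem mem_core_of_conj {x w d e : L} (hw : w ∈ U) (hd : d ∈ core U x) (he : e ∈ core U x)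
    (h : w * (d * x) * w⁻¹ = e * x) : w ∈ core U x := by
  refine le_core U (E := {y | ∃ a ∈ core U x, ∃ b ∈ core U x, y = a * w * b}) ?_ ?_
    ⟨1, one_mem _, 1, one_mem _, by simp⟩
  · rintro _ ⟨a, ha, b, hb, rfl⟩
    exact mul_mem (mul_mem (core_le U x ha) hw) (core_le U x hb)
  · rintro _ ⟨a, ha, b, hb, rfl⟩
    refine ⟨x * a * x⁻¹ * e⁻¹, mul_mem (conj_mem_core U ha) (inv_mem he), d * (x * b * x⁻¹),
      mul_mem hd (conj_mem_core U hb), ?_⟩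
    have hxw : x * w = e⁻¹ * w * d * x := by
      have h' : w * (d * x) = e * x * w := mul_inv_eq_iff_eq_mul.mp h
      calc x * w = e⁻¹ * (e * x * w) := by group
        _ = e⁻¹ * w * d * x := by rw [← h']; group
    calc x * (a * w * b) * x⁻¹ = x * a * x⁻¹ * (x * w) * b * x⁻¹ := by group
      _ = _ := by rw [hxw]; group

/-- The equivalence relation whose class at `x` is the union of the `U`-conjugates of the coset
`(core U x) x`. -/
def coreSetoid : Setoid L where
  r x y := ∃ v ∈ U, ∃ d ∈ core U x, y = v * (d * x) * v⁻¹
  iseqv := by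
    refine ⟨fun x => ⟨1, one_mem _, 1, one_mem _, by simp⟩, ?_, ?_⟩
    · rintro x _ ⟨v, hv, d, hd, rfl⟩
      refine ⟨v⁻¹, inv_mem hv, v * d⁻¹ * v⁻¹, core_conj U hv ?_, by group⟩
      rw [core_mul U hd]
      exact inv_mem hd
    · rintro x _ _ ⟨v, hv, d, hd, rfl⟩ ⟨w, hw, e, he, rfl⟩
      have he' : v⁻¹ * e * v ∈ core U x := by
        have := core_conj U (inv_mem hv) he
        rw [show v⁻¹ * (v * (d * x) * v⁻¹) * v⁻¹⁻¹ = d * x by group, core_mul U hd,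
          inv_inv] at this
        exact this
      exact ⟨w * v, mul_mem hw hv, v⁻¹ * e * v * d, mul_mem he' hd, by group⟩

/-- The class of `x` is parametrized by `U / D` and `D`, where `D = core U x`. -/
theorem card_coreSetoid_class (x : L) :
    Nat.card {y // coreSetoid U x y} = Nat.card U := by
  let D := (core U x).subgroupOf U
  let f : (U ⧸ D) × core U x → {y // coreSetoid U x y} := fun t =>
    ⟨(t.1.out : L) * (t.2 * x) * (t.1.out : L)⁻¹, t.1.out, t.1.out.2, t.2, t.2.2, rfl⟩
  have hf : Function.Bijective f := by
    constructor
    · rintro ⟨s, d, hd⟩ ⟨t, e, he⟩ h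
      have h' : (s.out : L) * (d * x) * (s.out : L)⁻¹ = t.out * (e * x) * (t.out : L)⁻¹ :=
        congrArg Subtype.val h
      have hst : s = t := by
        rw [← QuotientGroup.out_eq' s, ← QuotientGroup.out_eq' t, eq_comm, QuotientGroup.eq]
        refine mem_core_of_conj U (mul_mem (inv_mem t.out.2) s.out.2) hd he ?_
        calc ((t.out : L)⁻¹ * s.out) * (d * x) * ((t.out : L)⁻¹ * s.out)⁻¹
            = (t.out : L)⁻¹ * (s.out * (d * x) * (s.out : L)⁻¹) * t.out := by group
          _ = e * x := by rw [h']; group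
      subst hst
      simpa using h'
    · rintro ⟨_, v, hv, d, hd, rfl⟩
      let t : U ⧸ D := QuotientGroup.mk ⟨v, hv⟩
      have ht : (t.out : L)⁻¹ * v ∈ core U x := by
        have : (t.out)⁻¹ * ⟨v, hv⟩ ∈ D := by
          rw [← QuotientGroup.eq, QuotientGroup.out_eq']
        exact this
      -- With `w = t.out⁻¹ v ∈ D`, the element `w d x w⁻¹` equals `w d (x w⁻¹ x⁻¹) x ∈ D x`.
      refine ⟨⟨t, (t.out : L)⁻¹ * v * d * (x * ((t.out : L)⁻¹ * v)⁻¹ * x⁻¹),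
        mul_mem (mul_mem ht hd) (conj_mem_core U (inv_mem ht))⟩, Subtype.ext ?_⟩
      change (t.out : L) * ((t.out : L)⁻¹ * v * d * (x * ((t.out : L)⁻¹ * v)⁻¹ * x⁻¹) * x) *
        (t.out : L)⁻¹ = _
      group
  rw [← Nat.card_congr (Equiv.ofBijective f hf), Nat.card_prod,
    Subgroup.card_eq_card_quotient_mul_card_subgroup D,
    Nat.card_congr (Subgroup.subgroupOfEquivOfLe (core_le U x)).toEquiv]

end Core

theorem dvd_card_of_setoid {α : Type*} [Finite α] (s : Setoid α) (S : Set α) (c : ℕ)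
    (hS : ∀ x ∈ S, ∀ y, s x y → y ∈ S) (hc : ∀ x, Nat.card {y // s x y} = c) :
    c ∣ Nat.card S := by
  classical
  let q : S → Quotient s := fun x => Quotient.mk s x
  have : Fintype (Quotient s) := Fintype.ofFinite _
  rw [← Nat.card_congr (Equiv.sigmaFiberEquiv q), Nat.card_sigma]
  refine Finset.dvd_sum fun t _ => ?_
  by_cases ht : ∃ x : S, q x = t
  · obtain ⟨x, rfl⟩ := ht
    rw [← hc x]
    refine dvd_of_eq (Nat.card_congr ?_)
    exact
      { toFun := fun y => ⟨⟨y.1, hS x x.2 y y.2⟩, Quotient.sound (s.symm y.2)⟩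
        invFun := fun y => ⟨y.1, s.symm (Quotient.exact y.2)⟩
        left_inv := fun _ => rfl
        right_inv := fun _ => rfl }
  · have : IsEmpty {x // q x = t} := ⟨fun x => ht ⟨x.1, x.2⟩⟩
    simp

/-- P. Hall's generalization of Frobenius' theorem: if `K` is a normal subgroup
of a finite group `L` and `u ∈ L`, then for each `n ≥ 1` the number of
solutions of `y^n = 1` in the coset `Ku` is a multiple of `gcd(|K|, n)`. -/
theorem stmt13 {L : Type*} [Group L] [Fintype L] (K : Subgroup L) [K.Normal]
    (u : L) (n : ℕ) (hn : 1 ≤ n) :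
    Nat.gcd (Nat.card K) n ∣ Nat.card {y : L // y * u⁻¹ ∈ K ∧ y ^ n = 1} := by
  rw [Nat.dvd_iff_prime_pow_dvd_dvd]
  intro p k hp hk
  have : Fact p.Prime := ⟨hp⟩
  obtain ⟨V, hV⟩ := Sylow.exists_subgroup_card_pow_prime p (hk.trans (Nat.gcd_dvd_left _ _))
  let U : Subgroup L := V.map K.subtype
  have hUK : U ≤ K := Subgroup.map_subtype_le V
  have hU : Nat.card U = p ^ k := by
    rw [← hV]; exact Subgroup.card_map_of_injective K.subtype_injective
  refine dvd_card_of_setoid (coreSetoid U) {y : L | y * u⁻¹ ∈ K ∧ y ^ n = 1} (p ^ k) ?_ ?_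
  · rintro x ⟨hxu, hx⟩ _ ⟨v, hv, d, hd, rfl⟩
    constructor
    · -- Modulo `K` the elements `v` and `d` are trivial.
      have hxv : x * v⁻¹ * x⁻¹ ∈ K :=
        ‹K.Normal›.conj_mem _ (inv_mem (hUK hv)) x
      rw [show v * (d * x) * v⁻¹ * u⁻¹ = v * d * (x * v⁻¹ * x⁻¹) * (x * u⁻¹) by group]
      exact mul_mem (mul_mem (mul_mem (hUK hv) (hUK (core_le U x hd))) hxv) hxu
    · have hdvd : Nat.card (core U x) ∣ p ^ k := hU ▸ Subgroup.card_dvd_of_le (core_le U x)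
      obtain ⟨a, -, ha⟩ := (Nat.dvd_prime_pow hp).mp hdvd
      rw [conj_pow, mul_pow_eq_one (core U x) ha x d (fun e he => conj_mem_core U he) hd
        (ha ▸ hdvd.trans (hk.trans (Nat.gcd_dvd_right _ _))) hx]
      group
  · intro x
    rw [card_coreSetoid_class, hU]
end
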